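/- arXiv:1805.05554 — 7 statements merged into one kernel-verified Lean document; each statement's English description precedes it below -/
import Mathlib

section
/- Let d ≥ 2 be an integer and let N be a Poisson random variable such that ∑_{i=1}^{d-1} P(N = i)·(i/d) + P(N ≥ d) = 1 − 1/(2d). Then P(N ≥ d) + (1 − P(N ≥ d))·(1 − 1/(2d)) ≥ 1 − 1/(4d). -/
open MeasureTheory

/-- Let `d ≥ 2` be an integer and `N` a Poisson random variable (with some mean `μ ≥ 0`)
such that `∑_{i=1}^{d−1} P(N = i)·(i/d) + P(N ≥ d) = 1 − 1/(2d)`.  Then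
`P(N ≥ d) + (1 − P(N ≥ d))·(1 − 1/(2d)) ≥ 1 − 1/(4d)`. -/
theorem stmt2 {Ω : Type*} [MeasurableSpace Ω] (ℙ : Measure Ω) [IsProbabilityMeasure ℙ]
    (N : Ω → ℕ) (hNm : Measurable N) (μ : ℝ) (hμ : 0 ≤ μ)
    (hN : ∀ i : ℕ, ℙ {ω | N ω = i} = ENNReal.ofReal (Real.exp (-μ) * μ ^ i / (Nat.factorial i)))
    (d : ℕ) (hd : 2 ≤ d)
    (h : ∑ i ∈ Finset.Icc 1 (d - 1), (ℙ {ω | N ω = i}).toReal * ((i : ℝ) / (d : ℝ))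
          + (ℙ {ω | d ≤ N ω}).toReal = 1 - 1 / (2 * (d : ℝ))) :
    (ℙ {ω | d ≤ N ω}).toReal
        + (1 - (ℙ {ω | d ≤ N ω}).toReal) * (1 - 1 / (2 * (d : ℝ)))
      ≥ 1 - 1 / (4 * (d : ℝ)) := by
  have hd0 : (0 : ℝ) < d := by exact_mod_cast (by omega : 0 < d)
  have hms : ∀ i : ℕ, MeasurableSet {ω | N ω = i} := fun i => hNm (measurableSet_singleton i)
  have hmd : MeasurableSet {ω | d ≤ N ω} := hNm (measurableSet_Ici (a := d))
  -- P(N < d) as a finite sum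
  have hlt : ℙ.real {ω | d ≤ N ω}ᶜ = ∑ i ∈ Finset.range d, ℙ.real {ω | N ω = i} := by
    rw [← measureReal_biUnion_finset]
    · congr 1
      ext ω
      simp
    · intro i _ j _ hij
      refine Set.disjoint_left.2 fun ω h1 h2 => hij ?_
      exact h1.symm.trans h2
    · intro i _
      exact hms i
  rw [probReal_compl_eq_one_sub hmd] at hlt
  have hsum : ∑ i ∈ Finset.Icc 1 (d - 1), (ℙ {ω | N ω = i}).toReal * ((i : ℝ) / (d : ℝ))
      = ∑ i ∈ Finset.range d, ℙ.real {ω | N ω = i} * ((i : ℝ) / (d : ℝ)) := by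
    apply Finset.sum_subset
    · intro i hi
      simp only [Finset.mem_Icc, Finset.mem_range] at *
      omega
    · intro i hi hi'
      simp only [Finset.mem_Icc, Finset.mem_range] at *
      have : i = 0 := by omega
      simp [this]
  rw [hsum] at h
  have hle : ∑ i ∈ Finset.range d, ℙ.real {ω | N ω = i} * ((i : ℝ) / (d : ℝ))
      ≤ ∑ i ∈ Finset.range d, ℙ.real {ω | N ω = i} * (1 - 1 / (d : ℝ)) := by
    apply Finset.sum_le_sum
    intro i hi
    apply mul_le_mul_of_nonneg_left _ measureReal_nonneg
    have : (i : ℝ) + 1 ≤ d := by exact_mod_cast Finset.mem_range.1 hi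
    rw [le_sub_iff_add_le, ← add_div, div_le_one hd0]
    exact this
  rw [← Finset.sum_mul, ← hlt] at hle
  change _ + ℙ.real {ω | d ≤ N ω} = _ at h
  change ℙ.real {ω | d ≤ N ω} + (1 - ℙ.real {ω | d ≤ N ω}) * _ ≥ _
  generalize ℙ.real {ω | d ≤ N ω} = p at *
  have e1 : 1 / (2 * (d : ℝ)) = (1 / d) / 2 := by field_simp
  have e2 : 1 / (4 * (d : ℝ)) = (1 / d) / 4 := by field_simp
  rw [e1] at h ⊢
  rw [e2]
  generalize 1 / (d : ℝ) = x at *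
  nlinarith
end

section
/- For every real c > 0, every U ≥ 0, and every μ ≥ 0, U·e^{−μ} + (c/2)·(1 − e^{−μ} − μ·e^{−μ}) ≥ (c/2)·(1 − e^{−2U/c}). In other words, the function μ ↦ U·e^{−μ} + (c/2)(1 − e^{−μ} − μe^{−μ}) attains its minimum over μ ≥ 0 at μ = 2U/c, where its value is (c/2)(1 − e^{−2U/c}). -/
/-- For every real `c > 0`, every `U ≥ 0`, and every `μ ≥ 0`,
`U·e^{−μ} + (c/2)·(1 − e^{−μ} − μ·e^{−μ}) ≥ (c/2)·(1 − e^{−2U/c})`;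
i.e. the function of `μ` attains its minimum over `μ ≥ 0` at `μ = 2U/c`,
where its value is `(c/2)(1 − e^{−2U/c})`. -/
theorem stmt6 (c U μ : ℝ) (hc : 0 < c) (hU : 0 ≤ U) (hμ : 0 ≤ μ) :
    U * Real.exp (-μ) + (c / 2) * (1 - Real.exp (-μ) - μ * Real.exp (-μ))
      ≥ (c / 2) * (1 - Real.exp (-(2 * U / c))) := by
  obtain ⟨t, ht⟩ : ∃ t, t = 2 * U / c := ⟨_, rfl⟩
  have hUt : U = c / 2 * t := by rw [ht]; field_simp
  rw [← ht, hUt]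
  have h1 : Real.exp (-t) = Real.exp (-μ) * Real.exp (μ - t) := by
    rw [← Real.exp_add]; congr 1; ring
  have h2 : Real.exp (-μ) * (μ - t + 1) ≤ Real.exp (-t) := by
    rw [h1]
    exact mul_le_mul_of_nonneg_left (Real.add_one_le_exp _) (Real.exp_pos _).le
  have h3 := mul_le_mul_of_nonneg_left h2 (half_pos hc).le
  linarith
end

section
/- Let c > 0, let U and U^L be reals with 0 ≤ U ≤ c and U^L ≥ U/2. Then for every μ ≥ 0, U^L·e^{−μ} + (c/2)·(1 − e^{−μ} − μ·e^{−μ}) ≥ (1/2)·(1 − 1/e)·U. -/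
/-- Let `c > 0`, `0 ≤ U ≤ c` and `U^L ≥ U/2`. Then for every `μ ≥ 0`,
`U^L·e^{−μ} + (c/2)·(1 − e^{−μ} − μ·e^{−μ}) ≥ (1/2)·(1 − 1/e)·U`. -/
theorem stmt8 (c U UL μ : ℝ) (hc : 0 < c) (hU0 : 0 ≤ U) (hUc : U ≤ c)
    (hUL : UL ≥ U / 2) (hμ : 0 ≤ μ) :
    UL * Real.exp (-μ) + (c / 2) * (1 - Real.exp (-μ) - μ * Real.exp (-μ))
      ≥ (1 / 2) * (1 - 1 / Real.exp 1) * U := by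
  have hE : 0 < Real.exp (-μ) := Real.exp_pos _
  have h1 : (μ + 1) * Real.exp (-μ) ≤ 1 := by
    have h := mul_le_mul_of_nonneg_right (Real.add_one_le_exp μ) hE.le
    rwa [← Real.exp_add, add_neg_cancel, Real.exp_zero] at h
  have h2 : μ * Real.exp (-μ) ≤ 1 / Real.exp 1 := by
    have h := mul_le_mul_of_nonneg_right (Real.add_one_le_exp (μ - 1)) hE.le
    rw [← Real.exp_add, sub_add_cancel, show μ - 1 + -μ = -1 by ring, Real.exp_neg 1] at h
    rwa [one_div]
  have a1 := mul_le_mul_of_nonneg_right hUL hE.le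
  have a2 := mul_nonneg (sub_nonneg.2 hUc) (sub_nonneg.2 h1)
  have a3 := mul_nonneg hU0 (sub_nonneg.2 h2)
  nlinarith [a1, a2, a3]
end

section
/- Let d ≥ 2 be an integer, let c > 0 and U ≥ 0, and set μ₀ = (d+1)U/c. For μ ≥ 0 let Y_μ denote a Poisson random variable with mean μ. Then for every μ ≥ 0, U·P(Y_μ ≤ d−1) + (dc/(d+1))·P(Y_μ ≥ d+1) ≥ U·P(Y_{μ₀} ≤ d−1) + (dc/(d+1))·P(Y_{μ₀} ≥ d+1); that is, the function μ ↦ U·P(Y_μ < d) + (dc/(d+1))·P(Y_μ > d) is minimized over μ ≥ 0 at μ = (d+1)U/c. -/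
/-- Probability that a Poisson random variable with mean `μ` equals `i`. -/
noncomputable def poisProb (μ : ℝ) (i : ℕ) : ℝ :=
  Real.exp (-μ) * μ ^ i / (Nat.factorial i)

lemma pois_hasDeriv (n : ℕ) (x : ℝ) :
    HasDerivAt (fun μ => ∑ i ∈ Finset.range (n + 1), poisProb μ i) (-poisProb x n) x := by
  have he : HasDerivAt (fun μ : ℝ => Real.exp (-μ)) (-Real.exp (-x)) x := by
    simpa using (hasDerivAt_neg x).exp
  induction n with
  | zero =>
    simpa [poisProb] using he
  | succ n ih =>
    simp_rw [Finset.sum_range_succ _ (n + 1)]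
    have h2 : HasDerivAt (fun μ : ℝ => poisProb μ (n + 1))
        (poisProb x n - poisProb x (n + 1)) x := by
      have h3 := (he.mul (hasDerivAt_pow (n + 1) x)).div_const ((n + 1).factorial : ℝ)
      refine h3.congr_deriv ?_
      have hf : (n.factorial : ℝ) ≠ 0 := by positivity
      have hn : (n : ℝ) + 1 ≠ 0 := by positivity
      simp only [poisProb, Nat.factorial_succ, Nat.add_sub_cancel]
      push_cast
      field_simp
      ring
    exact (ih.add h2).congr_deriv (by ring)

lemma pois_tail (d : ℕ) (x : ℝ) :
    (∑' i : ℕ, if d + 1 ≤ i then poisProb x i else 0)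
      = 1 - ∑ i ∈ Finset.range (d + 1), poisProb x i := by
  have h1 : HasSum (fun i => poisProb x i) 1 := by
    have h := (NormedSpace.expSeries_div_hasSum_exp (𝔸 := ℝ) x).mul_left (Real.exp (-x))
    rw [← Real.exp_eq_exp_ℝ, ← Real.exp_add, neg_add_cancel, Real.exp_zero] at h
    simpa [poisProb, mul_div_assoc] using h
  have h2 : HasSum (fun i => if i < d + 1 then poisProb x i else 0)
      (∑ i ∈ Finset.range (d + 1), poisProb x i) := by
    have h := hasSum_sum_of_ne_finset_zero (f := fun i => if i < d + 1 then poisProb x i else 0)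
      (s := Finset.range (d + 1)) (L := .unconditional ℕ) (fun b hb => by
        rw [Finset.mem_range] at hb
        simp only [if_neg hb])
    convert h using 1
    refine Finset.sum_congr rfl fun i hi => ?_
    rw [Finset.mem_range] at hi
    simp only [if_pos hi]
  rw [← (h1.sub h2).tsum_eq]
  refine tsum_congr fun i => ?_
  by_cases h : i < d + 1
  · simp [h, Nat.not_le.mpr h]
  · simp [h, Nat.not_lt.mp h]

/-- Let `d ≥ 2`, `c > 0`, `U ≥ 0`, and `μ₀ = (d+1)U/c`.  For a Poisson random
variable `Y_μ` with mean `μ`, the function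
`μ ↦ U·P(Y_μ ≤ d−1) + (dc/(d+1))·P(Y_μ ≥ d+1)` is minimized over `μ ≥ 0` at
`μ = μ₀`. -/
theorem stmt10 (d : ℕ) (hd : 2 ≤ d) (c U : ℝ) (hc : 0 < c) (hU : 0 ≤ U)
    (μ : ℝ) (hμ : 0 ≤ μ) :
    U * (∑ i ∈ Finset.range d, poisProb (((d : ℝ) + 1) * U / c) i)
        + ((d : ℝ) * c / ((d : ℝ) + 1))
          * (∑' i : ℕ, if d + 1 ≤ i then poisProb (((d : ℝ) + 1) * U / c) i else 0)
      ≤ U * (∑ i ∈ Finset.range d, poisProb μ i)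
          + ((d : ℝ) * c / ((d : ℝ) + 1))
            * (∑' i : ℕ, if d + 1 ≤ i then poisProb μ i else 0) := by
  obtain ⟨e, rfl⟩ : ∃ e, d = e + 1 := ⟨d - 1, by omega⟩
  rw [pois_tail, pois_tail]
  set m : ℝ := (((e + 1 : ℕ) : ℝ) + 1) * U / c with hm
  set K : ℝ := ((e + 1 : ℕ) : ℝ) * c / (((e + 1 : ℕ) : ℝ) + 1) with hK
  have hm0 : 0 ≤ m := by positivity
  let f : ℝ → ℝ := fun x => U * (∑ i ∈ Finset.range (e + 1), poisProb x i)
    + K * (1 - ∑ i ∈ Finset.range (e + 1 + 1), poisProb x i)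
  have hf : ∀ x, HasDerivAt f (poisProb x e * (c / ((e : ℝ) + 2)) * (x - m)) x := by
    intro x
    have h := ((pois_hasDeriv e x).const_mul U).add
      (((pois_hasDeriv (e + 1) x).const_sub 1).const_mul K)
    refine h.congr_deriv ?_
    have hf : (e.factorial : ℝ) ≠ 0 := by positivity
    have hn : (e : ℝ) + 1 ≠ 0 := by positivity
    have hn' : (e : ℝ) + 2 ≠ 0 := by positivity
    have hn2 : (e : ℝ) + 1 + 1 = e + 2 := by ring
    simp only [hm, hK, poisProb, Nat.factorial_succ]
    push_cast
    rw [hn2]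
    field_simp
    ring
  have hpos : ∀ x, 0 ≤ x → 0 ≤ poisProb x e * (c / ((e : ℝ) + 2)) := by
    intro x hx
    unfold poisProb
    positivity
  have hcont : Continuous f := continuous_iff_continuousAt.mpr fun x => (hf x).continuousAt
  change f m ≤ f μ
  rcases le_total m μ with h | h
  · have hmono : MonotoneOn f (Set.Icc m μ) := by
      refine monotoneOn_of_deriv_nonneg (convex_Icc _ _) hcont.continuousOn
        (fun x _ => (hf x).differentiableAt.differentiableWithinAt) fun x hx => ?_
      rw [interior_Icc] at hx
      rw [(hf x).deriv]
      exact mul_nonneg (hpos x (hm0.trans hx.1.le)) (sub_nonneg.mpr hx.1.le)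
    exact hmono (Set.left_mem_Icc.mpr h) (Set.right_mem_Icc.mpr h) h
  · have hanti : AntitoneOn f (Set.Icc μ m) := by
      refine antitoneOn_of_deriv_nonpos (convex_Icc _ _) hcont.continuousOn
        (fun x _ => (hf x).differentiableAt.differentiableWithinAt) fun x hx => ?_
      rw [interior_Icc] at hx
      rw [(hf x).deriv]
      exact mul_nonpos_of_nonneg_of_nonpos (hpos x (hμ.trans hx.1.le)) (sub_nonpos.mpr hx.2.le)
    exact hanti (Set.left_mem_Icc.mpr h) (Set.right_mem_Icc.mpr h) h
end

section
/- Let m ≥ 1 be an integer and let N′ and N be Poisson random variables with means μ′ and μ respectively, where 0 ≤ μ′ ≤ μ. Then E[min(1, m/(N′+1))] ≥ E[min(1, m/(N+1))]; that is, μ ↦ E[min(1, m/(N_μ+1))] is nonincreasing in the Poisson mean μ. -/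
open MeasureTheory

lemma law_aux {Ω : Type*} [MeasurableSpace Ω] (P : Measure Ω)
    (N : Ω → ℕ) (hNm : Measurable N) (r : NNReal)
    (hN : ∀ i : ℕ, P {ω | N ω = i} =
      ENNReal.ofReal (Real.exp (-(r : ℝ)) * (r : ℝ) ^ i / (Nat.factorial i))) :
    P.map N = ProbabilityTheory.poissonMeasure r := by
  refine Measure.ext_of_singleton fun i => ?_
  rw [Measure.map_apply hNm (measurableSet_singleton i),
    ProbabilityTheory.poissonMeasure_singleton]
  exact hN i

lemma mono_aux (f : ℕ → ℝ) (hf : Antitone f) (C : ℝ) (hC : ∀ n, ‖f n‖ ≤ C) (r s : NNReal) :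
    ∫ n, f n ∂(ProbabilityTheory.poissonMeasure (r + s))
      ≤ ∫ n, f n ∂(ProbabilityTheory.poissonMeasure r) := by
  rw [← ProbabilityTheory.poissonMeasure_conv_poissonMeasure, Measure.conv,
    integral_map (by fun_prop) (by fun_prop)]
  have h : ∫ n, f n ∂(ProbabilityTheory.poissonMeasure r) =
      ∫ p : ℕ × ℕ, f p.1 ∂((ProbabilityTheory.poissonMeasure r).prod
        (ProbabilityTheory.poissonMeasure s)) := by
    rw [integral_fun_fst]; simp
  rw [h]
  refine integral_mono ?_ ?_ fun p => hf (Nat.le_add_right _ _)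
  · exact Integrable.of_bound (by fun_prop) C (Filter.Eventually.of_forall fun p => hC _)
  · exact Integrable.of_bound (by fun_prop) C (Filter.Eventually.of_forall fun p => hC _)

/-- Let `m ≥ 1` be an integer and `N′`, `N` Poisson random variables with means
`0 ≤ μ′ ≤ μ`.  Then `E[min(1, m/(N′+1))] ≥ E[min(1, m/(N+1))]`; that is,
the quantity `E[min(1, m/(N_μ+1))]` is nonincreasing in the Poisson mean `μ`. -/
theorem stmt12 {Ω₁ Ω₂ : Type*} [MeasurableSpace Ω₁] [MeasurableSpace Ω₂]
    (ℙ₁ : Measure Ω₁) [IsProbabilityMeasure ℙ₁] (ℙ₂ : Measure Ω₂) [IsProbabilityMeasure ℙ₂]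
    (N' : Ω₁ → ℕ) (hN'm : Measurable N') (N : Ω₂ → ℕ) (hNm : Measurable N)
    (μ' μ : ℝ) (hμ'0 : 0 ≤ μ') (hμ'μ : μ' ≤ μ)
    (hN' : ∀ i : ℕ, ℙ₁ {ω | N' ω = i} = ENNReal.ofReal (Real.exp (-μ') * μ' ^ i / (Nat.factorial i)))
    (hN : ∀ i : ℕ, ℙ₂ {ω | N ω = i} = ENNReal.ofReal (Real.exp (-μ) * μ ^ i / (Nat.factorial i)))
    (m : ℕ) (hm : 1 ≤ m) :
    ∫ ω, min (1 : ℝ) ((m : ℝ) / ((N' ω : ℝ) + 1)) ∂ℙ₁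
      ≥ ∫ ω, min (1 : ℝ) ((m : ℝ) / ((N ω : ℝ) + 1)) ∂ℙ₂ := by
  lift μ' to NNReal using hμ'0
  lift μ to NNReal using le_trans μ'.2 hμ'μ
  have hle : μ' ≤ μ := by exact_mod_cast hμ'μ
  obtain ⟨s, rfl⟩ := exists_add_of_le hle
  have key := mono_aux (fun n : ℕ => min (1 : ℝ) ((m : ℝ) / ((n : ℝ) + 1)))
    (fun a b hab => by
      have : (a : ℝ) ≤ b := by exact_mod_cast hab
      dsimp only
      gcongr) 1 (fun n => by
      rw [Real.norm_of_nonneg (by positivity)]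
      exact min_le_left _ _) μ' s
  rw [← law_aux ℙ₁ N' hN'm μ' hN', ← law_aux ℙ₂ N hNm (μ' + s) hN,
    integral_map hNm.aemeasurable (Measurable.of_discrete).aestronglyMeasurable, integral_map hN'm.aemeasurable (Measurable.of_discrete).aestronglyMeasurable] at key
  exact key
end

section
/- Let m ≥ 1 be an integer and let N_μ and N_ν be Poisson random variables with means 0 < μ ≤ ν. Then E[min(N_μ, m)]/μ ≥ E[min(N_ν, m)]/ν; that is, the ratio E[min(N_μ, m)]/μ is nonincreasing in the Poisson mean μ > 0. -/
open MeasureTheory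

noncomputable def poisP (i : ℕ) (x : ℝ) : ℝ := Real.exp (-x) * x ^ i / (Nat.factorial i)

noncomputable def poisT (m : ℕ) (x : ℝ) : ℝ := ∑ i ∈ Finset.range m, poisP i x

noncomputable def poisG (m : ℕ) (x : ℝ) : ℝ := ∑ k ∈ Finset.range m, (1 - poisT (k + 1) x)

theorem poisP_zero_hasDerivAt (x : ℝ) : HasDerivAt (poisP 0) (-poisP 0 x) x := by
  have h := (hasDerivAt_neg x).exp
  have e : poisP 0 = fun x => Real.exp (-x) := by
    funext y; simp [poisP]
  rw [e]
  simpa using h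

theorem poisP_succ_hasDerivAt (i : ℕ) (x : ℝ) :
    HasDerivAt (poisP (i + 1)) (poisP i x - poisP (i + 1) x) x := by
  have h := (((hasDerivAt_neg x).exp).mul (hasDerivAt_pow (i + 1) x)).div_const
    (Nat.factorial (i + 1) : ℝ)
  refine HasDerivAt.congr_deriv (f := poisP (i + 1)) h ?_
  have h1 : (Nat.factorial i : ℝ) ≠ 0 := by positivity
  have h2 : ((i : ℝ) + 1) ≠ 0 := by positivity
  simp only [poisP, Nat.factorial_succ]
  push_cast
  try rw [Nat.add_sub_cancel]
  field_simp
  ring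

theorem poisT_hasDerivAt (k : ℕ) (x : ℝ) :
    HasDerivAt (poisT (k + 1)) (-poisP k x) x := by
  induction k with
  | zero =>
    have e : poisT (0 + 1) = poisP 0 := by funext y; simp [poisT]
    rw [e]; exact poisP_zero_hasDerivAt x
  | succ k ih =>
    have e : poisT (k + 1 + 1) = poisT (k + 1) + poisP (k + 1) := by
      funext y; simp [poisT, Finset.sum_range_succ]
    rw [e]
    refine (ih.add (poisP_succ_hasDerivAt k x)).congr_deriv ?_
    ring

theorem poisG_hasDerivAt (m : ℕ) (x : ℝ) : HasDerivAt (poisG m) (poisT m x) x := by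
  have h : HasDerivAt (fun y => ∑ k ∈ Finset.range m, (1 - poisT (k + 1) y))
      (∑ k ∈ Finset.range m, poisP k x) x := by
    refine HasDerivAt.fun_sum fun k _ => ?_
    simpa using (poisT_hasDerivAt k x).const_sub 1
  exact h

theorem poisP_nonneg (i : ℕ) {x : ℝ} (hx : 0 ≤ x) : 0 ≤ poisP i x := by
  unfold poisP; positivity

theorem poisT_antitoneOn (m : ℕ) : AntitoneOn (poisT (m + 1)) (Set.Ici 0) := by
  refine antitoneOn_of_deriv_nonpos (convex_Ici 0)
    (fun x _ => (poisT_hasDerivAt m x).continuousAt.continuousWithinAt)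
    (fun x _ => (poisT_hasDerivAt m x).differentiableAt.differentiableWithinAt) ?_
  intro x hx
  rw [interior_Ici] at hx
  rw [(poisT_hasDerivAt m x).deriv]
  have := poisP_nonneg m (le_of_lt hx)
  linarith

theorem poisG_concave (m : ℕ) : ConcaveOn ℝ (Set.Ici 0) (poisG (m + 1)) := by
  refine AntitoneOn.concaveOn_of_deriv (convex_Ici 0)
    (fun x _ => (poisG_hasDerivAt _ x).continuousAt.continuousWithinAt)
    (fun x _ => (poisG_hasDerivAt _ x).differentiableAt.differentiableWithinAt) ?_
  have e : deriv (poisG (m + 1)) = poisT (m + 1) := by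
    funext x; exact (poisG_hasDerivAt _ x).deriv
  rw [e]
  exact (poisT_antitoneOn m).mono interior_subset

theorem poisG_zero (m : ℕ) : poisG m 0 = 0 := by
  unfold poisG
  refine Finset.sum_eq_zero fun k _ => ?_
  simp [poisT, poisP, Finset.sum_range_succ']

theorem min_eq_sum (n m : ℕ) : ((min n m : ℕ) : ℝ) =
    ∑ k ∈ Finset.range m, (1 - ∑ i ∈ Finset.range (k + 1), if n = i then (1 : ℝ) else 0) := by
  induction m with
  | zero => simp
  | succ m ih =>
    rw [Finset.sum_range_succ, ← ih, Finset.sum_ite_eq]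
    simp only [Finset.mem_range]
    by_cases h : n < m + 1
    · rw [if_pos h, min_eq_left h.le, min_eq_left (by omega)]; ring
    · rw [if_neg h, min_eq_right (by omega), min_eq_right (by omega)]; push_cast; ring

theorem integral_min_eq {Ω : Type*} [MeasurableSpace Ω] (P : Measure Ω) [IsProbabilityMeasure P]
    (N : Ω → ℕ) (hN : Measurable N) (μ : ℝ) (hμ : 0 < μ)
    (h : ∀ i : ℕ, P {ω | N ω = i} = ENNReal.ofReal (Real.exp (-μ) * μ ^ i / (Nat.factorial i)))
    (m : ℕ) : ∫ ω, ((min (N ω) m : ℕ) : ℝ) ∂P = poisG m μ := by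
  have hs : ∀ i, MeasurableSet {ω | N ω = i} := fun i => hN (measurableSet_singleton i)
  have e : ∀ i, (fun ω => if N ω = i then (1 : ℝ) else 0)
      = Set.indicator {ω | N ω = i} (fun _ => (1 : ℝ)) := by
    intro i; funext ω; simp [Set.indicator]
  have hint : ∀ i, Integrable (fun ω => if N ω = i then (1 : ℝ) else 0) P := by
    intro i
    rw [e]; exact (integrable_const 1).indicator (hs i)
  have hval : ∀ i, ∫ ω, (if N ω = i then (1 : ℝ) else 0) ∂P = poisP i μ := by
    intro i
    rw [e, integral_indicator_const _ (hs i), Measure.real, h i,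
      ENNReal.toReal_ofReal (by positivity)]
    simp [poisP]
  simp_rw [min_eq_sum]
  rw [integral_finsetSum]
  · refine Finset.sum_congr rfl fun k _ => ?_
    rw [integral_sub (integrable_const 1) (integrable_finsetSum _ fun i _ => hint i),
      integral_finsetSum _ fun i _ => hint i]
    simp [hval, poisT]
  · intro k _
    exact (integrable_const 1).sub (integrable_finsetSum _ fun i _ => hint i)

/-- Let `m ≥ 1` be an integer and `N_μ`, `N_ν` Poisson random variables with means
`0 < μ ≤ ν`.  Then `E[min(N_μ, m)]/μ ≥ E[min(N_ν, m)]/ν`; that is, the ratio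
`E[min(N_μ, m)]/μ` is nonincreasing in the Poisson mean `μ > 0`. -/
theorem stmt13 {Ω₁ Ω₂ : Type*} [MeasurableSpace Ω₁] [MeasurableSpace Ω₂]
    (ℙ₁ : Measure Ω₁) [IsProbabilityMeasure ℙ₁] (ℙ₂ : Measure Ω₂) [IsProbabilityMeasure ℙ₂]
    (Nμ : Ω₁ → ℕ) (hNμm : Measurable Nμ) (Nν : Ω₂ → ℕ) (hNνm : Measurable Nν)
    (μ ν : ℝ) (hμ0 : 0 < μ) (hμν : μ ≤ ν)
    (hNμ : ∀ i : ℕ, ℙ₁ {ω | Nμ ω = i} = ENNReal.ofReal (Real.exp (-μ) * μ ^ i / (Nat.factorial i)))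
    (hNν : ∀ i : ℕ, ℙ₂ {ω | Nν ω = i} = ENNReal.ofReal (Real.exp (-ν) * ν ^ i / (Nat.factorial i)))
    (m : ℕ) (hm : 1 ≤ m) :
    (∫ ω, ((min (Nμ ω) m : ℕ) : ℝ) ∂ℙ₁) / μ
      ≥ (∫ ω, ((min (Nν ω) m : ℕ) : ℝ) ∂ℙ₂) / ν := by
  rw [integral_min_eq ℙ₁ Nμ hNμm μ hμ0 hNμ m,
    integral_min_eq ℙ₂ Nν hNνm ν (hμ0.trans_le hμν) hNν m]
  obtain ⟨n, rfl⟩ : ∃ n, m = n + 1 := ⟨m - 1, by omega⟩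
  have hν0 : 0 < ν := hμ0.trans_le hμν
  have hc := (poisG_concave n).2 (Set.mem_Ici.2 le_rfl) (Set.mem_Ici.2 hν0.le)
    (show 0 ≤ 1 - μ / ν by rw [sub_nonneg, div_le_one hν0]; exact hμν)
    (show 0 ≤ μ / ν by positivity) (by ring)
  have e : μ / ν * ν = μ := by field_simp
  simp only [smul_eq_mul, poisG_zero, mul_zero, zero_add, e] at hc
  rw [ge_iff_le, le_div_iff₀ hμ0]
  calc poisG (n + 1) ν / ν * μ = μ / ν * poisG (n + 1) ν := by ring
    _ ≤ _ := hc
end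

section
/- For every integer d ≥ 2, 1 − e^{−d}·∑_{i=d}^{∞} (i − d + 1)·d^{i−1}/i! ≥ 1 − 1/√(2πd) − 1/d. -/
/-- For every integer `d ≥ 2`,
`1 − e^{−d}·∑_{i=d}^{∞} (i − d + 1)·d^{i−1}/i! ≥ 1 − 1/√(2πd) − 1/d`. -/
theorem stmt16 (d : ℕ) (hd : 2 ≤ d) :
    1 - Real.exp (-(d : ℝ)) *
        (∑' i : ℕ, if d ≤ i then ((i : ℝ) - (d : ℝ) + 1) * (d : ℝ) ^ (i - 1) / (Nat.factorial i) else 0)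
      ≥ 1 - 1 / Real.sqrt (2 * Real.pi * d) - 1 / (d : ℝ) := by
  have hd0 : (0 : ℝ) < d := by exact_mod_cast (by omega : 0 < d)
  have hst := Stirling.le_factorial_stirling d
  obtain ⟨g, hg⟩ : ∃ g : ℕ → ℝ, ∀ i, g i = (d : ℝ) ^ i / (Nat.factorial i) := ⟨_, fun _ => rfl⟩
  have hgs : HasSum g (Real.exp d) := by
    have h := NormedSpace.expSeries_div_hasSum_exp (d : ℝ)
    rw [← Real.exp_eq_exp_ℝ] at h
    rwa [show g = _ from funext hg]
  have hg0 : ∀ i, 0 ≤ g i := fun i => by rw [hg]; positivity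
  have hsh : ∀ k, Summable fun n => g (n + k) := fun k => (summable_nat_add_iff k).2 hgs.summable
  have hT : (∑' n, g (n + d)) ≤ Real.exp d := by
    have h := hgs.summable.sum_add_tsum_nat_add d
    rw [hgs.tsum_eq] at h
    have : 0 ≤ ∑ i ∈ Finset.range d, g i := Finset.sum_nonneg fun i _ => hg0 i
    linarith
  have htel : (∑' n, g (n + (d - 1))) = g (d - 1) + ∑' n, g (n + d) := by
    rw [(hsh (d-1)).tsum_eq_zero_add, zero_add]
    congr 2
    funext n
    congr 1
    omega
  have hgd : g (d - 1) = g d := by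
    obtain ⟨m, rfl⟩ : ∃ m, d = m + 1 := ⟨d - 1, by omega⟩
    rw [hg, hg, Nat.add_sub_cancel, Nat.factorial_succ, pow_succ]
    push_cast at hd0 ⊢
    have := Nat.factorial_pos m
    field_simp
  set f : ℕ → ℝ := fun i => if d ≤ i then ((i : ℝ) - (d : ℝ) + 1) * (d : ℝ) ^ (i - 1) / (Nat.factorial i) else 0 with hf
  have hfn : ∀ n, f (n + d) = g (n + (d - 1)) - g (n + d) + g (n + d) / d := by
    intro n
    obtain ⟨m, rfl⟩ : ∃ m, d = m + 1 := ⟨d - 1, by omega⟩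
    have e : n + (m + 1) = (n + m) + 1 := by omega
    simp only [hf, hg, Nat.add_sub_cancel, e]
    rw [if_pos (by omega), Nat.factorial_succ, pow_succ]
    push_cast at hd0 ⊢
    have := Nat.factorial_pos (n + m)
    field_simp
    try ring
  have hs1 := ((hsh (d-1)).sub (hsh d))
  have hs2 := (hsh d).div_const (d : ℝ)
  have hfs : Summable f := by
    rw [← summable_nat_add_iff d]
    simp_rw [hfn]
    exact hs1.add hs2
  have hsum : ∑' i, f i = g d + (∑' n, g (n + d)) / d := by
    rw [← hfs.sum_add_tsum_nat_add d, Finset.sum_eq_zero, zero_add]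
    · simp_rw [hfn]
      rw [hs1.tsum_add hs2, (hsh (d-1)).tsum_sub (hsh d), tsum_div_const, htel, hgd]
      ring
    · intro i hi
      have := Finset.mem_range.1 hi
      simp only [hf]
      rw [if_neg (by omega)]
  rw [hsum, mul_add]
  have hE : Real.exp (-(d:ℝ)) * Real.exp d = 1 := by rw [← Real.exp_add]; simp
  have h2 : Real.exp (-(d:ℝ)) * ((∑' n, g (n + d)) / d) ≤ 1 / d := by
    rw [← mul_div_assoc]
    gcongr
    rw [← hE]
    gcongr
  have h1 : Real.exp (-(d:ℝ)) * g d ≤ 1 / Real.sqrt (2 * Real.pi * d) := by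
    have hs : 0 < Real.sqrt (2 * Real.pi * d) := by positivity
    have hfa : (0:ℝ) < (Nat.factorial d) := by exact_mod_cast Nat.factorial_pos d
    rw [hg, le_div_iff₀ hs, ← mul_div_assoc, div_mul_eq_mul_div, div_le_one hfa]
    refine le_trans (le_of_eq ?_) hst
    rw [div_pow, ← Real.exp_nat_mul, mul_one, Real.exp_neg]
    ring
  linarith
end
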